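/- Additivity of the geometric Rényi channel divergence: Let α ∈ (1,2] and let E₁, F₁ : M_{d₁}(ℂ) → M_{d₁'}(ℂ) and E₂, F₂ : M_{d₂}(ℂ) → M_{d₂'}(ℂ) be quantum channels. Then 𝐷̂_α(E₁ ⊗ E₂ ‖ F₁ ⊗ F₂) = 𝐷̂_α(E₁‖F₁) + 𝐷̂_α(E₂‖F₂) as extended reals, where E₁ ⊗ E₂ denotes the tensor product channel acting on M_{d₁d₂}(ℂ) ≅ M_{d₁}(ℂ) ⊗ M_{d₂}(ℂ) via Kronecker products. -/

import Mathlib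

open scoped Kronecker ComplexOrder

noncomputable section

namespace QCD

attribute [local instance] Classical.propDecidable

variable {n m : Type} [Fintype n] [DecidableEq n] [Fintype m] [DecidableEq m]

/-- The real part of the trace of a complex matrix. -/
def rtr (A : Matrix n n ℂ) : ℝ := (A.trace).re

/-- A quantum state: positive semidefinite with trace one. -/
def IsState (ρ : Matrix n n ℂ) : Prop := ρ.PosSemidef ∧ ρ.trace = 1

/-- Loewner order: `A ≤ B` iff `B - A` is positive semidefinite. -/
def loewnerLE (A B : Matrix n n ℂ) : Prop := (B - A).PosSemidef

/-- Support containment (for PSD matrices): `ker σ ⊆ ker ρ`. -/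
def SuppLE (ρ σ : Matrix n n ℂ) : Prop := ∀ v : n → ℂ, σ.mulVec v = 0 → ρ.mulVec v = 0

/-- Functional calculus for Hermitian matrices (junk value `0` otherwise). -/
def matFun (f : ℝ → ℝ) (A : Matrix n n ℂ) : Matrix n n ℂ :=
  if hA : A.IsHermitian then
    (hA.eigenvectorUnitary : Matrix n n ℂ) *
      Matrix.diagonal (fun i => (f (hA.eigenvalues i) : ℂ)) *
      (star (hA.eigenvectorUnitary : Matrix n n ℂ))
  else 0

/-- Matrix square root via functional calculus. -/
def msqrt (A : Matrix n n ℂ) : Matrix n n ℂ := matFun Real.sqrt A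

/-- Matrix real power taken on the support (`0 ^ t := 0`). -/
def mpow (A : Matrix n n ℂ) (t : ℝ) : Matrix n n ℂ :=
  matFun (fun x => if x = 0 then 0 else x ^ t) A

/-- Matrix base-2 logarithm on the support. -/
def mlog (A : Matrix n n ℂ) : Matrix n n ℂ := matFun (Real.logb 2) A

/-- Positive part of a Hermitian matrix. -/
def mposPart (A : Matrix n n ℂ) : Matrix n n ℂ := matFun (fun x => max x 0) A

/-- Trace norm. -/
def traceNorm (A : Matrix n m ℂ) : ℝ := rtr (msqrt (A.conjTranspose * A))

/-- Base-2 logarithm as an extended real (`⊥` on nonpositive input). -/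
def elog (x : ℝ) : EReal := if x ≤ 0 then ⊥ else ((Real.logb 2 x : ℝ) : EReal)

/-- Base-2 logarithm of an extended real. -/
def elogE (x : EReal) : EReal := if x = ⊤ then ⊤ else elog x.toReal

/-- `2 ^ x` for an extended real `x`. -/
def epow2 (x : EReal) : EReal :=
  if x = ⊤ then ⊤ else if x = ⊥ then 0 else ((((2:ℝ) ^ x.toReal : ℝ)) : EReal)

/-- Umegaki relative entropy (base 2), `⊤` if the support condition fails. -/
def relEntropy (ρ σ : Matrix n n ℂ) : EReal :=
  if SuppLE ρ σ then ((rtr (ρ * (mlog ρ - mlog σ)) : ℝ) : EReal) else ⊤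

/-- Petz–Rényi divergence (base 2). -/
def petzRenyi (α : ℝ) (ρ σ : Matrix n n ℂ) : EReal :=
  if 1 < α ∧ ¬ SuppLE ρ σ then ⊤
  else (((α - 1)⁻¹ : ℝ) : EReal) * elog (rtr (mpow ρ α * mpow σ (1 - α)))

/-- Geometric (maximal) Rényi divergence (base 2). -/
def geomRenyi (α : ℝ) (ρ σ : Matrix n n ℂ) : EReal :=
  if SuppLE ρ σ then
    (((α - 1)⁻¹ : ℝ) : EReal) *
      elog (rtr (σ * mpow (mpow σ (-(1/2 : ℝ)) * ρ * mpow σ (-(1/2 : ℝ))) α))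
  else ⊤

/-- Max-relative entropy (base 2). -/
def dMax (ρ σ : Matrix n n ℂ) : EReal :=
  sInf {x : EReal | ∃ lam : ℝ, x = (lam : EReal) ∧ loewnerLE ρ ((((2:ℝ) ^ lam : ℝ) : ℂ) • σ)}

/-- Uhlmann fidelity. -/
def fidelity (ρ σ : Matrix n n ℂ) : ℝ := (rtr (msqrt (msqrt σ * ρ * msqrt σ))) ^ 2

/-- Sine (purified) distance. -/
def sineDist (ρ σ : Matrix n n ℂ) : ℝ := Real.sqrt (1 - fidelity ρ σ)

/-- Smoothed max-relative entropy: smoothing over states in the sine-distance ball. -/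
def dMaxSmooth (δ : ℝ) (ρ σ : Matrix n n ℂ) : EReal :=
  ⨅ (ρ' : Matrix n n ℂ) (_ : IsState ρ' ∧ sineDist ρ ρ' ≤ δ), dMax ρ' σ

/-- Hypothesis testing divergence (base 2). -/
def dH (ε : ℝ) (ρ σ : Matrix n n ℂ) : EReal :=
  - elog (sInf {x : ℝ | ∃ T : Matrix n n ℂ,
      T.PosSemidef ∧ ((1 : Matrix n n ℂ) - T).PosSemidef ∧ 1 - ε ≤ rtr (T * ρ) ∧ x = rtr (T * σ)})

/-- The quantity `c_γ(ρ‖σ)`. -/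
def cGamma (γ : ℝ) (ρ σ : Matrix n n ℂ) : EReal :=
  ((γ⁻¹ : ℝ) : EReal) *
    elogE (epow2 ((γ : ℝ) * petzRenyi (1 + γ) ρ σ) +
           epow2 (((-γ : ℝ) : EReal) * petzRenyi (1 - γ) ρ σ) + 1)

/-- Binary entropy (base 2). -/
def binEnt (x : ℝ) : ℝ := -(x * Real.logb 2 x) - (1 - x) * Real.logb 2 (1 - x)

/-- Action of `id_k ⊗ Φ` on block matrices. -/
def blockApply {k : Type} (Φ : Matrix n n ℂ →ₗ[ℂ] Matrix m m ℂ)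
    (M : Matrix (k × n) (k × n) ℂ) : Matrix (k × m) (k × m) ℂ :=
  Matrix.of fun p q => Φ (Matrix.of fun a b => M (p.1, a) (q.1, b)) p.2 q.2

/-- Action of `Φ ⊗ id_k` on block matrices. -/
def blockApplyRight {k : Type} (Φ : Matrix n n ℂ →ₗ[ℂ] Matrix m m ℂ)
    (M : Matrix (n × k) (n × k) ℂ) : Matrix (m × k) (m × k) ℂ :=
  Matrix.of fun p q => Φ (Matrix.of fun a b => M (a, p.2) (b, q.2)) p.1 q.1

/-- Quantum channel: trace preserving and completely positive. -/
def IsQChannel (Φ : Matrix n n ℂ →ₗ[ℂ] Matrix m m ℂ) : Prop :=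
  (∀ M : Matrix n n ℂ, (Φ M).trace = M.trace) ∧
  (∀ k : ℕ, 1 ≤ k → ∀ M : Matrix (Fin k × n) (Fin k × n) ℂ, M.PosSemidef →
    (blockApply Φ M).PosSemidef)

/-- `id_k ⊗ Φ` as a linear map. -/
def blockApplyL (k : Type) (Φ : Matrix n n ℂ →ₗ[ℂ] Matrix m m ℂ) :
    Matrix (k × n) (k × n) ℂ →ₗ[ℂ] Matrix (k × m) (k × m) ℂ where
  toFun := blockApply Φ
  map_add' M N := by
    ext p q
    show Φ (Matrix.of fun a b => (M + N) (p.1, a) (q.1, b)) p.2 q.2 = _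
    have h : (Matrix.of fun a b => (M + N) (p.1, a) (q.1, b)) =
        (Matrix.of fun a b => M (p.1, a) (q.1, b)) +
          (Matrix.of fun a b => N (p.1, a) (q.1, b)) := rfl
    rw [h, map_add]
    rfl
  map_smul' c M := by
    ext p q
    show Φ (Matrix.of fun a b => (c • M) (p.1, a) (q.1, b)) p.2 q.2 = _
    have h : (Matrix.of fun a b => (c • M) (p.1, a) (q.1, b)) =
        c • (Matrix.of fun a b => M (p.1, a) (q.1, b)) := rfl
    rw [h, map_smul]
    rfl

/-- `Φ ⊗ id_k` as a linear map. -/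
def blockApplyRightL (k : Type) (Φ : Matrix n n ℂ →ₗ[ℂ] Matrix m m ℂ) :
    Matrix (n × k) (n × k) ℂ →ₗ[ℂ] Matrix (m × k) (m × k) ℂ where
  toFun := blockApplyRight Φ
  map_add' M N := by
    ext p q
    show Φ (Matrix.of fun a b => (M + N) (a, p.2) (b, q.2)) p.1 q.1 = _
    have h : (Matrix.of fun a b => (M + N) (a, p.2) (b, q.2)) =
        (Matrix.of fun a b => M (a, p.2) (b, q.2)) +
          (Matrix.of fun a b => N (a, p.2) (b, q.2)) := rfl
    rw [h, map_add]
    rfl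
  map_smul' c M := by
    ext p q
    show Φ (Matrix.of fun a b => (c • M) (a, p.2) (b, q.2)) p.1 q.1 = _
    have h : (Matrix.of fun a b => (c • M) (a, p.2) (b, q.2)) =
        c • (Matrix.of fun a b => M (a, p.2) (b, q.2)) := rfl
    rw [h, map_smul]
    rfl

/-- Tensor product of two channels (Kronecker product action). -/
def tensorChannel {n₁ m₁ n₂ m₂ : Type}
    (E₁ : Matrix n₁ n₁ ℂ →ₗ[ℂ] Matrix m₁ m₁ ℂ) (E₂ : Matrix n₂ n₂ ℂ →ₗ[ℂ] Matrix m₂ m₂ ℂ) :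
    Matrix (n₁ × n₂) (n₁ × n₂) ℂ →ₗ[ℂ] Matrix (m₁ × m₂) (m₁ × m₂) ℂ :=
  (blockApplyRightL m₂ E₁).comp (blockApplyL n₁ E₂)

/-- Index type for `k`-fold tensor powers. -/
def tpow (ι : Type) : ℕ → Type
  | 0 => PUnit
  | (k+1) => tpow ι k × ι

def tpowFintype (ι : Type) [Fintype ι] : ∀ k : ℕ, Fintype (tpow ι k)
  | 0 => inferInstanceAs (Fintype PUnit)
  | (k+1) => letI := tpowFintype ι k; inferInstanceAs (Fintype (tpow ι k × ι))

instance (ι : Type) [Fintype ι] (k : ℕ) : Fintype (tpow ι k) := tpowFintype ι k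

def tpowDecEq (ι : Type) [DecidableEq ι] : ∀ k : ℕ, DecidableEq (tpow ι k)
  | 0 => inferInstanceAs (DecidableEq PUnit)
  | (k+1) => letI := tpowDecEq ι k; inferInstanceAs (DecidableEq (tpow ι k × ι))

instance (ι : Type) [DecidableEq ι] (k : ℕ) : DecidableEq (tpow ι k) := tpowDecEq ι k

/-- `k`-fold Kronecker tensor power of a matrix. -/
def tpowMat (ρ : Matrix n n ℂ) : ∀ k : ℕ, Matrix (tpow n k) (tpow n k) ℂ
  | 0 => 1
  | (k+1) => (tpowMat ρ k) ⊗ₖ ρ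

/-- `k`-fold tensor power of a channel. -/
def tpowChannel (Φ : Matrix n n ℂ →ₗ[ℂ] Matrix m m ℂ) :
    ∀ k : ℕ, Matrix (tpow n k) (tpow n k) ℂ →ₗ[ℂ] Matrix (tpow m k) (tpow m k) ℂ
  | 0 => LinearMap.id
  | (k+1) => tensorChannel (tpowChannel Φ k) Φ

/-- Channel divergence induced by a divergence `𝔇` on states:
sup over `k ≥ 1` and input states `ν` on `ℂ^k ⊗ ℂ^d`. -/
def chDiv (𝔇 : ∀ (p : Type) [Fintype p] [DecidableEq p], Matrix p p ℂ → Matrix p p ℂ → EReal)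
    (E F : Matrix n n ℂ →ₗ[ℂ] Matrix m m ℂ) : EReal :=
  ⨆ (k : ℕ) (_ : 1 ≤ k) (ν : Matrix (Fin k × n) (Fin k × n) ℂ) (_ : IsState ν),
    𝔇 (Fin k × m) (blockApply E ν) (blockApply F ν)

/-- The geometric Rényi divergence as a divergence family. -/
def geomD (α : ℝ) : ∀ (p : Type) [Fintype p] [DecidableEq p],
    Matrix p p ℂ → Matrix p p ℂ → EReal :=
  fun _ _ _ => geomRenyi α

/-- The Umegaki relative entropy as a divergence family. -/
def relD : ∀ (p : Type) [Fintype p] [DecidableEq p],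
    Matrix p p ℂ → Matrix p p ℂ → EReal :=
  fun _ _ _ => relEntropy

/-- The hypothesis testing divergence as a divergence family. -/
def dHD (ε : ℝ) : ∀ (p : Type) [Fintype p] [DecidableEq p],
    Matrix p p ℂ → Matrix p p ℂ → EReal :=
  fun _ _ _ => dH ε

/-- Regularized channel relative entropy. -/
def regRelEntropy (E F : Matrix n n ℂ →ₗ[ℂ] Matrix m m ℂ) : EReal :=
  ⨆ (k : ℕ) (_ : 1 ≤ k),
    (((k : ℝ)⁻¹ : ℝ) : EReal) * chDiv relD (tpowChannel E k) (tpowChannel F k)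

end QCD

namespace QCD
section Part1

open Matrix
open scoped Kronecker ComplexOrder

variable {n m l : Type} [Fintype n] [DecidableEq n] [Fintype m] [DecidableEq m]
  [Fintype l] [DecidableEq l]

theorem matFun_eq (f : ℝ → ℝ) {A : Matrix n n ℂ} (hA : A.IsHermitian) :
    matFun f A = (hA.eigenvectorUnitary : Matrix n n ℂ) *
      Matrix.diagonal (fun i => (f (hA.eigenvalues i) : ℂ)) *
      (star (hA.eigenvectorUnitary : Matrix n n ℂ)) := by
  simp [matFun, hA]

theorem eigU_star_mul {A : Matrix n n ℂ} (hA : A.IsHermitian) :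
    (star (hA.eigenvectorUnitary : Matrix n n ℂ)) * (hA.eigenvectorUnitary : Matrix n n ℂ) = 1 :=
  Unitary.coe_star_mul_self _

theorem eigU_mul_star {A : Matrix n n ℂ} (hA : A.IsHermitian) :
    (hA.eigenvectorUnitary : Matrix n n ℂ) * (star (hA.eigenvectorUnitary : Matrix n n ℂ)) = 1 :=
  Unitary.coe_mul_star_self _

theorem matFun_id' {A : Matrix n n ℂ} (hA : A.IsHermitian) : matFun (fun x => x) A = A := by
  rw [matFun_eq _ hA]
  exact hA.spectral_theorem.symm

theorem mul_eigU {A : Matrix n n ℂ} (hA : A.IsHermitian) :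
    A * (hA.eigenvectorUnitary : Matrix n n ℂ) = (hA.eigenvectorUnitary : Matrix n n ℂ) *
      Matrix.diagonal (fun i => (hA.eigenvalues i : ℂ)) := by
  have h := matFun_id' hA
  rw [matFun_eq _ hA] at h
  have h2 := congrArg (fun X => X * (hA.eigenvectorUnitary : Matrix n n ℂ)) h
  simp only [Matrix.mul_assoc, eigU_star_mul, Matrix.mul_one] at h2
  exact h2.symm

theorem matFun_mul_eigU (f : ℝ → ℝ) {A : Matrix n n ℂ} (hA : A.IsHermitian) :
    matFun f A * (hA.eigenvectorUnitary : Matrix n n ℂ) =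
      (hA.eigenvectorUnitary : Matrix n n ℂ) *
      Matrix.diagonal (fun i => (f (hA.eigenvalues i) : ℂ)) := by
  rw [matFun_eq _ hA, Matrix.mul_assoc, eigU_star_mul, Matrix.mul_one]

/-- Base intertwining lemma. -/
theorem matFun_intertwine_diag (f : ℝ → ℝ) {A : Matrix n n ℂ} (hA : A.IsHermitian)
    (K : Matrix n m ℂ) (b : m → ℝ)
    (h : A * K = K * Matrix.diagonal (fun j => (b j : ℂ))) :
    matFun f A * K = K * Matrix.diagonal (fun j => (f (b j) : ℂ)) := by
  set U := (hA.eigenvectorUnitary : Matrix n n ℂ) with hU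
  have hUU : U * star U = 1 := eigU_mul_star hA
  have hUU' : star U * U = 1 := eigU_star_mul hA
  have key : Matrix.diagonal (fun i => (hA.eigenvalues i : ℂ)) * (star U * K) =
      (star U * K) * Matrix.diagonal (fun j => (b j : ℂ)) := by
    have h2 := matFun_id' hA
    rw [matFun_eq _ hA, ← hU] at h2
    rw [Matrix.mul_assoc (star U), ← h]
    have h3 := congrArg (fun X => star U * (X * K)) h2
    simp only [Matrix.mul_assoc] at h3
    rw [← Matrix.mul_assoc (star U) U, hUU', Matrix.one_mul] at h3
    exact h3
  have key2 : Matrix.diagonal (fun i => (f (hA.eigenvalues i) : ℂ)) * (star U * K) =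
      (star U * K) * Matrix.diagonal (fun j => (f (b j) : ℂ)) := by
    ext i j
    have h3 := congrFun (congrFun key i) j
    rw [Matrix.diagonal_mul, Matrix.mul_diagonal] at h3 ⊢
    by_cases hz : (star U * K) i j = 0
    · rw [hz]; simp
    · have : (hA.eigenvalues i : ℂ) = (b j : ℂ) := by
        rw [mul_comm] at h3
        exact mul_left_cancel₀ hz h3
      have h4 : hA.eigenvalues i = b j := by exact_mod_cast this
      rw [h4, mul_comm]
  rw [matFun_eq _ hA, ← hU, Matrix.mul_assoc, Matrix.mul_assoc, key2]
  simp only [← Matrix.mul_assoc]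
  rw [hUU, Matrix.one_mul]

theorem matFun_intertwine (f : ℝ → ℝ) {A : Matrix n n ℂ} {B : Matrix m m ℂ}
    (hA : A.IsHermitian) (hB : B.IsHermitian) (K : Matrix n m ℂ) (h : A * K = K * B) :
    matFun f A * K = K * matFun f B := by
  have h1 := matFun_intertwine_diag f hA (K * (hB.eigenvectorUnitary : Matrix m m ℂ))
    hB.eigenvalues (by
      rw [← Matrix.mul_assoc, h, Matrix.mul_assoc, mul_eigU, Matrix.mul_assoc])
  rw [Matrix.mul_assoc K, ← matFun_mul_eigU, ← Matrix.mul_assoc, ← Matrix.mul_assoc] at h1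
  have h2 := congrArg (fun X => X * star (hB.eigenvectorUnitary : Matrix m m ℂ)) h1
  simp only [Matrix.mul_assoc, eigU_mul_star, Matrix.mul_one] at h2
  exact h2

theorem matFun_isHermitian (f : ℝ → ℝ) (A : Matrix n n ℂ) : (matFun f A).IsHermitian := by
  by_cases hA : A.IsHermitian
  · rw [matFun_eq _ hA]
    apply Matrix.isHermitian_mul_mul_conjTranspose
    rw [Matrix.isHermitian_diagonal_iff]
    intro i
    simp [IsSelfAdjoint]
  · simp [matFun, hA]

theorem matFun_congr {f g : ℝ → ℝ} {A : Matrix n n ℂ} (hA : A.IsHermitian)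
    (h : ∀ i, f (hA.eigenvalues i) = g (hA.eigenvalues i)) : matFun f A = matFun g A := by
  rw [matFun_eq _ hA, matFun_eq _ hA]
  simp [h]

theorem matFun_mul (f g : ℝ → ℝ) {A : Matrix n n ℂ} (hA : A.IsHermitian) :
    matFun f A * matFun g A = matFun (fun x => f x * g x) A := by
  rw [matFun_eq f hA, matFun_eq g hA, matFun_eq _ hA]
  simp only [Matrix.mul_assoc]
  rw [← Matrix.mul_assoc (star _) _ (_ * star _), eigU_star_mul, Matrix.one_mul,
    ← Matrix.mul_assoc (diagonal _) (diagonal _), diagonal_mul_diagonal]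
  simp

theorem matFun_posSemidef (f : ℝ → ℝ) {A : Matrix n n ℂ} (hA : A.IsHermitian)
    (h : ∀ i, 0 ≤ f (hA.eigenvalues i)) : (matFun f A).PosSemidef := by
  rw [matFun_eq _ hA]
  apply Matrix.PosSemidef.mul_mul_conjTranspose_same
  rw [posSemidef_diagonal_iff]
  intro i
  exact_mod_cast h i

/-! mpow -/

theorem mpow_herm (A : Matrix n n ℂ) (t : ℝ) : (mpow A t).IsHermitian := matFun_isHermitian _ _

theorem mpow_psd {A : Matrix n n ℂ} (hA : A.PosSemidef) (t : ℝ) : (mpow A t).PosSemidef := by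
  apply matFun_posSemidef _ hA.1
  intro i
  have := hA.eigenvalues_nonneg i
  split_ifs
  · exact le_rfl
  · positivity

theorem mpow_mul {A : Matrix n n ℂ} (hA : A.PosSemidef) (s t : ℝ) :
    mpow A s * mpow A t = mpow A (s + t) := by
  unfold mpow
  rw [matFun_mul _ _ hA.1]
  apply matFun_congr hA.1
  intro i
  have := hA.eigenvalues_nonneg i
  by_cases h : hA.1.eigenvalues i = 0
  · simp [h]
  · simp only [h, if_false]
    rw [Real.rpow_add (lt_of_le_of_ne this (Ne.symm h))]

theorem mpow_one {A : Matrix n n ℂ} (hA : A.PosSemidef) : mpow A 1 = A := by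
  conv_rhs => rw [← matFun_id' hA.1]
  apply matFun_congr hA.1
  intro i
  split_ifs with h
  · exact h.symm
  · simp

theorem mpow_intertwine {A : Matrix n n ℂ} {B : Matrix m m ℂ} (t : ℝ)
    (hA : A.IsHermitian) (hB : B.IsHermitian) (K : Matrix n m ℂ) (h : A * K = K * B) :
    mpow A t * K = K * mpow B t := matFun_intertwine _ hA hB K h

theorem mpow_kron {A : Matrix n n ℂ} {B : Matrix m m ℂ} (t : ℝ)
    (hA : A.PosSemidef) (hB : B.PosSemidef) :
    mpow (A ⊗ₖ B) t = mpow A t ⊗ₖ mpow B t := by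
  set U := (hA.1.eigenvectorUnitary : Matrix n n ℂ) with hU
  set V := (hB.1.eigenvectorUnitary : Matrix m m ℂ) with hV
  have h1 := matFun_intertwine_diag (fun x => if x = 0 then 0 else x ^ t)
    (hA.kronecker hB).1 (U ⊗ₖ V)
    (fun p => hA.1.eigenvalues p.1 * hB.1.eigenvalues p.2) (by
      rw [← mul_kronecker_mul, mul_eigU, mul_eigU, mul_kronecker_mul, diagonal_kronecker_diagonal]
      simp [hU, hV])
  have h2 : (mpow A t ⊗ₖ mpow B t) * (U ⊗ₖ V) = (U ⊗ₖ V) * diagonal (fun p : n × m =>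
      (((if hA.1.eigenvalues p.1 * hB.1.eigenvalues p.2 = 0 then 0 else
        (hA.1.eigenvalues p.1 * hB.1.eigenvalues p.2) ^ t : ℝ)) : ℂ)) := by
    unfold mpow
    rw [← mul_kronecker_mul, hU, hV, matFun_mul_eigU, matFun_mul_eigU, mul_kronecker_mul,
      diagonal_kronecker_diagonal]
    congr 2
    ext p
    rw [← Complex.ofReal_mul]
    congr 1
    have := hA.eigenvalues_nonneg p.1
    have := hB.eigenvalues_nonneg p.2
    by_cases ha : hA.1.eigenvalues p.1 = 0
    · simp [ha]
    by_cases hb : hB.1.eigenvalues p.2 = 0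
    · simp [hb]
    simp only [ha, hb, mul_eq_zero, or_self, if_false]
    rw [Real.mul_rpow] <;> assumption
  have h3 : mpow (A ⊗ₖ B) t * (U ⊗ₖ V) = (mpow A t ⊗ₖ mpow B t) * (U ⊗ₖ V) := by
    rw [h2, ← h1]; rfl
  have h4 := congrArg (fun X => X * (star U ⊗ₖ star V)) h3
  have h5 : (U ⊗ₖ V) * (star U ⊗ₖ star V) = 1 := by
    rw [← mul_kronecker_mul, hU, hV, eigU_mul_star, eigU_mul_star, one_kronecker_one]
  simpa [Matrix.mul_assoc, h5] using h4

theorem mpow_submatrix {A : Matrix n n ℂ} (hA : A.IsHermitian) (t : ℝ) (e : m ≃ n) :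
    mpow (A.submatrix e e) t = (mpow A t).submatrix e e := by
  have h := mpow_intertwine t (hA.submatrix e) hA ((1 : Matrix n n ℂ).submatrix e id) (by
    ext i j
    simp only [Matrix.mul_apply, Matrix.one_apply, submatrix_apply, id_eq]
    rw [e.sum_comp (fun x => A (e i) x * if x = j then 1 else 0)]
    simp)
  ext i j
  have h2 := congrFun (congrFun h i) (e j)
  simpa [Matrix.mul_apply, Matrix.one_apply] using h2

theorem mpow_one_mat (t : ℝ) : mpow (1 : Matrix n n ℂ) t = 1 := by
  have h := matFun_intertwine_diag (fun x => if x = 0 then 0 else x ^ t)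
    (isHermitian_one (n := n) (α := ℂ)) (1 : Matrix n n ℂ) (fun _ => 1) (by simp)
  simpa [mpow] using h

section LH
open scoped MatrixOrder Matrix.Norms.L2Operator

theorem mpow_eq_rpow {A : Matrix n n ℂ} (hA : A.PosSemidef) {t : ℝ} (ht : 0 < t) :
    mpow A t = A ^ t := by
  rw [CFC.rpow_eq_cfc_real (a := A) (Matrix.nonneg_iff_posSemidef.2 hA), hA.1.cfc_eq]
  unfold mpow
  have : (fun x : ℝ => if x = 0 then 0 else x ^ t) = fun x => x ^ t := by
    ext x
    split_ifs with h
    · rw [h, Real.zero_rpow ht.ne']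
    · rfl
  rw [this, matFun_eq _ hA.1]
  rfl

theorem mpow_mono {A B : Matrix n n ℂ} (hA : A.PosSemidef) (hB : B.PosSemidef)
    (hAB : (B - A).PosSemidef) {t : ℝ} (ht : 0 < t) (ht1 : t ≤ 1) :
    (mpow B t - mpow A t).PosSemidef := by
  rw [mpow_eq_rpow hA ht, mpow_eq_rpow hB ht, ← Matrix.le_iff]
  exact CFC.rpow_le_rpow ⟨ht.le, ht1⟩ (Matrix.le_iff.2 hAB)

end LH

end Part1
end QCD

namespace QCD
section Part2

set_option linter.unusedSectionVars false

open Matrix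
open scoped Kronecker ComplexOrder

variable {n m l : Type} [Fintype n] [DecidableEq n] [Fintype m] [DecidableEq m]
  [Fintype l] [DecidableEq l]

/-- Normalized quotient. -/
def gT (ρ σ : Matrix n n ℂ) : Matrix n n ℂ := mpow σ (-(1/2 : ℝ)) * ρ * mpow σ (-(1/2 : ℝ))

/-- Operator perspective of `x ^ α`. -/
def gP (α : ℝ) (ρ σ : Matrix n n ℂ) : Matrix n n ℂ :=
  mpow σ (1/2 : ℝ) * mpow (gT ρ σ) α * mpow σ (1/2 : ℝ)

theorem psd_conj {A : Matrix n n ℂ} (hA : A.PosSemidef) (B : Matrix m n ℂ) :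
    (B * A * Bᴴ).PosSemidef := hA.mul_mul_conjTranspose_same B

theorem psd_conj_herm {A B : Matrix n n ℂ} (hA : A.PosSemidef) (hB : B.IsHermitian) :
    (B * A * B).PosSemidef := by
  have := hA.mul_mul_conjTranspose_same B
  rwa [hB.eq] at this

theorem gT_psd {ρ σ : Matrix n n ℂ} (hρ : ρ.PosSemidef) : (gT ρ σ).PosSemidef :=
  psd_conj_herm hρ (mpow_herm _ _)

theorem gP_psd (α : ℝ) {ρ σ : Matrix n n ℂ} (hρ : ρ.PosSemidef) : (gP α ρ σ).PosSemidef :=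
  psd_conj_herm (mpow_psd (gT_psd hρ) α) (mpow_herm _ _)

theorem half_mul_half {σ : Matrix n n ℂ} (hσ : σ.PosSemidef) :
    mpow σ (1/2 : ℝ) * mpow σ (1/2 : ℝ) = σ := by
  rw [mpow_mul hσ, show (1/2 + 1/2 : ℝ) = 1 by norm_num, mpow_one hσ]

theorem half_mul_neg {σ : Matrix n n ℂ} (hσ : σ.PosSemidef) :
    mpow σ (1/2 : ℝ) * mpow σ (-(1/2) : ℝ) = mpow σ 0 := by
  rw [mpow_mul hσ]; norm_num

theorem neg_mul_half {σ : Matrix n n ℂ} (hσ : σ.PosSemidef) :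
    mpow σ (-(1/2) : ℝ) * mpow σ (1/2 : ℝ) = mpow σ 0 := by
  rw [mpow_mul hσ]; norm_num

theorem zero_mul_mpow {σ : Matrix n n ℂ} (hσ : σ.PosSemidef) (t : ℝ) :
    mpow σ 0 * mpow σ t = mpow σ t := by
  rw [mpow_mul hσ]; simp

theorem mpow_mul_zero {σ : Matrix n n ℂ} (hσ : σ.PosSemidef) (t : ℝ) :
    mpow σ t * mpow σ 0 = mpow σ t := by
  rw [mpow_mul hσ]; simp

theorem trace_gP (α : ℝ) {ρ σ : Matrix n n ℂ} (hσ : σ.PosSemidef) :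
    rtr (σ * mpow (mpow σ (-(1/2 : ℝ)) * ρ * mpow σ (-(1/2 : ℝ))) α) = rtr (gP α ρ σ) := by
  unfold rtr gP gT
  rw [Matrix.trace_mul_comm (_ * _) (mpow σ (1/2)), ← Matrix.mul_assoc, half_mul_half hσ]

theorem supp_mul_proj {ρ σ : Matrix n n ℂ} (hσ : σ.PosSemidef) (h : SuppLE ρ σ) :
    ρ * mpow σ 0 = ρ := by
  have h1 : σ * (1 - mpow σ 0) = 0 := by
    rw [Matrix.mul_sub, Matrix.mul_one]
    nth_rewrite 1 2 [← mpow_one hσ]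
    nth_rewrite 2 [mpow_one hσ]
    have := mpow_mul_zero hσ 1
    rw [mpow_one hσ] at this
    rw [this, mpow_one hσ, sub_self]
  have h2 : ρ * (1 - mpow σ 0) = 0 := by
    ext i j
    have := h (fun i => (1 - mpow σ 0) i j) (by
      ext i
      exact congrFun (congrFun h1 i) j)
    exact congrFun this i
  rw [Matrix.mul_sub, Matrix.mul_one, sub_eq_zero] at h2
  exact h2.symm

theorem proj_mul_supp {ρ σ : Matrix n n ℂ} (hρ : ρ.PosSemidef) (hσ : σ.PosSemidef)
    (h : SuppLE ρ σ) : mpow σ 0 * ρ = ρ := by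
  have := congrArg conjTranspose (supp_mul_proj hσ h)
  rwa [conjTranspose_mul, hρ.1.eq, (mpow_herm σ 0).eq] at this

theorem half_gT_half {ρ σ : Matrix n n ℂ} (hρ : ρ.PosSemidef) (hσ : σ.PosSemidef)
    (h : SuppLE ρ σ) : mpow σ (1/2 : ℝ) * gT ρ σ * mpow σ (1/2 : ℝ) = ρ := by
  have : mpow σ (1/2 : ℝ) * gT ρ σ * mpow σ (1/2 : ℝ) =
    (mpow σ (1/2 : ℝ) * mpow σ (-(1/2) : ℝ)) * ρ * (mpow σ (-(1/2) : ℝ) * mpow σ (1/2 : ℝ)) := by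
    unfold gT; simp only [Matrix.mul_assoc]
  rw [this, half_mul_neg hσ, neg_mul_half hσ, proj_mul_supp hρ hσ h, supp_mul_proj hσ h]

theorem suppLE_conj {ρ σ : Matrix n n ℂ} (hσ : σ.PosSemidef)
    (h : SuppLE ρ σ) (V : Matrix m n ℂ) : SuppLE (V * ρ * Vᴴ) (V * σ * Vᴴ) := by
  intro x hx
  have h1 : σ *ᵥ (Vᴴ *ᵥ x) = 0 := by
    rw [← hσ.dotProduct_mulVec_zero_iff]
    have h2 : star x ⬝ᵥ ((V * σ * Vᴴ) *ᵥ x) = 0 := by rw [hx]; simp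
    rw [← h2, star_mulVec, conjTranspose_conjTranspose, ← dotProduct_mulVec]
    simp [mulVec_mulVec, Matrix.mul_assoc]
  have h3 := h _ h1
  rw [Matrix.mul_assoc, ← mulVec_mulVec, ← mulVec_mulVec, h3, mulVec_zero]

/-- Transformer inequality for the operator perspective. -/
theorem gP_transformer {α : ℝ} (hα : 1 < α) (hα2 : α ≤ 2) {ρ σ : Matrix n n ℂ}
    (hρ : ρ.PosSemidef) (hσ : σ.PosSemidef) (h : SuppLE ρ σ) (V : Matrix m n ℂ) :
    (V * gP α ρ σ * Vᴴ - gP α (V * ρ * Vᴴ) (V * σ * Vᴴ)).PosSemidef := by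
  set σ' := V * σ * Vᴴ with hσ'
  set ρ' := V * ρ * Vᴴ with hρ'
  have pσ' : σ'.PosSemidef := psd_conj hσ V
  have pρ' : ρ'.PosSemidef := psd_conj hρ V
  set S := mpow σ (1/2 : ℝ) with hS
  set S' := mpow σ' (1/2 : ℝ) with hS'
  set R' := mpow σ' (-(1/2) : ℝ) with hR'
  set T := gT ρ σ with hT
  have pT : T.PosSemidef := gT_psd hρ
  have hSS : S * S = σ := half_mul_half hσ
  have hSTS : S * T * S = ρ := half_gT_half hρ hσ h
  have Sh : Sᴴ = S := (mpow_herm _ _).eq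
  have Rh' : R'ᴴ = R' := (mpow_herm _ _).eq
  have Sh' : S'ᴴ = S' := (mpow_herm _ _).eq
  set Q := mpow σ' 0 with hQ
  have Qh : Qᴴ = Q := (mpow_herm _ _).eq
  have hQR : Q * R' = R' := zero_mul_mpow pσ' _
  have hSR : S' * R' = Q := half_mul_neg pσ'
  set W := R' * V * S with hW
  have hWh : Wᴴ = S * Vᴴ * R' := by
    rw [hW]; simp [conjTranspose_mul, Sh, Rh', Matrix.mul_assoc]
  have hWW : W * Wᴴ = Q := by
    rw [hWh, hW]
    have : R' * V * S * (S * Vᴴ * R') = R' * (V * (S * S) * Vᴴ) * R' := by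
      simp only [Matrix.mul_assoc]
    rw [this, hSS, ← hσ']
    conv_lhs => rw [← mpow_one pσ']
    rw [hR', mpow_mul pσ', mpow_mul pσ']
    norm_num
    rfl
  have hQW : Q * W = W := by
    rw [hW]; simp only [← Matrix.mul_assoc]; rw [hQR]
  have hWTW : W * T * Wᴴ = gT ρ' σ' := by
    rw [hWh, hW]
    have : R' * V * S * T * (S * Vᴴ * R') = R' * (V * (S * T * S) * Vᴴ) * R' := by
      simp only [Matrix.mul_assoc]
    rw [this, hSTS]
    rfl
  have hproj : (1 - Wᴴ * W).PosSemidef := by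
    have h1 : (1 - Wᴴ * W)ᴴ * (1 - Wᴴ * W) = 1 - Wᴴ * W := by
      have h2 : Wᴴ * W * (Wᴴ * W) = Wᴴ * W := by
        rw [Matrix.mul_assoc, ← Matrix.mul_assoc W, hWW, hQW]
      rw [conjTranspose_sub, conjTranspose_one, conjTranspose_mul, conjTranspose_conjTranspose,
        Matrix.sub_mul, Matrix.mul_sub, Matrix.mul_sub, h2]
      simp
    rw [← h1]
    exact posSemidef_conjTranspose_mul_self _
  set H := mpow T (1/2 : ℝ) with hH
  have Hh : Hᴴ = H := (mpow_herm _ _).eq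
  have hHH : H * H = T := half_mul_half pT
  set A := W * H with hA
  have hAh : Aᴴ = H * Wᴴ := by rw [hA, conjTranspose_mul, Hh]
  have hAA : A * Aᴴ = gT ρ' σ' := by
    rw [← hWTW, hAh, hA, ← hHH]; simp only [Matrix.mul_assoc]
  have hle : (T - Aᴴ * A).PosSemidef := by
    have : T - Aᴴ * A = H * (1 - Wᴴ * W) * H := by
      rw [Matrix.mul_sub, Matrix.sub_mul, Matrix.mul_one, hHH, hAh, hA]
      simp only [Matrix.mul_assoc]
    rw [this]
    exact psd_conj_herm hproj (mpow_herm _ _)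
  have pAA : (Aᴴ * A).PosSemidef := posSemidef_conjTranspose_mul_self _
  have pAA' : (A * Aᴴ).PosSemidef := posSemidef_self_mul_conjTranspose _
  have hmono := mpow_mono pAA pT hle (t := α - 1) (by linarith) (by linarith)
  have e1 : mpow (gT ρ' σ') α = A * mpow (Aᴴ * A) (α - 1) * Aᴴ := by
    rw [← hAA]
    have h1 := mpow_mul pAA' (α - 1) 1
    rw [mpow_one pAA', sub_add_cancel] at h1
    rw [← h1, ← Matrix.mul_assoc, mpow_intertwine (α - 1) pAA'.1 pAA.1 A (Matrix.mul_assoc _ _ _)]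
  have e2 : W * mpow T α * Wᴴ = A * mpow T (α - 1) * Aᴴ := by
    have h1 : mpow T α = H * mpow T (α - 1) * H := by
      rw [hH, mpow_mul pT, mpow_mul pT]; congr 1; ring
    rw [h1, hAh, hA]; simp only [Matrix.mul_assoc]
  have e3 : (W * mpow T α * Wᴴ - mpow (gT ρ' σ') α).PosSemidef := by
    rw [e1, e2, ← Matrix.sub_mul, ← Matrix.mul_sub]
    exact psd_conj hmono A
  have e4 : Q * V * S = V * S := by
    have h1 : σ' * (1 - Q) = 0 := by
      have := mpow_mul_zero pσ' 1
      rw [mpow_one pσ'] at this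
      rw [Matrix.mul_sub, Matrix.mul_one, this, sub_self]
    have h2 : (S * Vᴴ * (1 - Q))ᴴ * (S * Vᴴ * (1 - Q)) = 0 := by
      have : (S * Vᴴ * (1 - Q))ᴴ * (S * Vᴴ * (1 - Q)) = (1 - Q) * (V * (S * S) * Vᴴ * (1 - Q)) := by
        simp [conjTranspose_mul, Sh, Qh, Matrix.mul_assoc]
      rw [this, hSS, ← hσ', h1, Matrix.mul_zero]
    rw [conjTranspose_mul_self_eq_zero] at h2
    have h3 := congrArg conjTranspose h2
    simp only [conjTranspose_mul, conjTranspose_sub, conjTranspose_one, Sh, Qh,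
      conjTranspose_conjTranspose, conjTranspose_zero, Matrix.sub_mul, Matrix.one_mul] at h3
    rw [Matrix.mul_assoc]
    exact (sub_eq_zero.1 h3).symm
  have e5 : S' * W = V * S := by
    rw [hW, ← Matrix.mul_assoc, ← Matrix.mul_assoc, hSR, e4]
  have e6 : V * gP α ρ σ * Vᴴ = S' * (W * mpow T α * Wᴴ) * S' := by
    have h1 : S' * (W * mpow T α * Wᴴ) * S' = (S' * W) * mpow T α * (S' * W)ᴴ := by
      rw [conjTranspose_mul S' W, Sh']; simp only [Matrix.mul_assoc]
    rw [h1, e5, conjTranspose_mul, Sh]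
    unfold gP
    simp only [Matrix.mul_assoc]
    rfl
  have e7 : gP α ρ' σ' = S' * mpow (gT ρ' σ') α * S' := rfl
  rw [e6, e7, ← Matrix.sub_mul, ← Matrix.mul_sub]
  exact psd_conj_herm e3 (mpow_herm _ _)

theorem psd_antisymm {A B : Matrix n n ℂ} (h1 : (A - B).PosSemidef) (h2 : (B - A).PosSemidef) :
    A = B := by
  open scoped MatrixOrder in
  exact le_antisymm (Matrix.le_iff.2 h2) (Matrix.le_iff.2 h1)

theorem gP_transformer_eq {α : ℝ} (hα : 1 < α) (hα2 : α ≤ 2) {ρ σ : Matrix n n ℂ}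
    (hρ : ρ.PosSemidef) (hσ : σ.PosSemidef) (h : SuppLE ρ σ) (V V' : Matrix n n ℂ)
    (hV : V' * V = 1) :
    V * gP α ρ σ * Vᴴ = gP α (V * ρ * Vᴴ) (V * σ * Vᴴ) := by
  have hV2 : V * V' = 1 := mul_eq_one_comm.1 hV
  have key : ∀ X, V' * (V * X * Vᴴ) * V'ᴴ = X := by
    intro X
    have : V' * (V * X * Vᴴ) * V'ᴴ = (V' * V) * X * (V' * V)ᴴ := by
      simp [conjTranspose_mul, Matrix.mul_assoc]
    rw [this, hV]; simp
  have key2 : ∀ X, V * (V' * X * V'ᴴ) * Vᴴ = X := by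
    intro X
    have : V * (V' * X * V'ᴴ) * Vᴴ = (V * V') * X * (V * V')ᴴ := by
      simp [conjTranspose_mul, Matrix.mul_assoc]
    rw [this, hV2]; simp
  apply psd_antisymm (gP_transformer hα hα2 hρ hσ h V)
  have h2 := gP_transformer hα hα2 (psd_conj hρ V) (psd_conj hσ V) (suppLE_conj hσ h V) V'
  rw [key, key] at h2
  have h3 := psd_conj h2 V
  rw [Matrix.mul_sub, Matrix.sub_mul, key2] at h3
  exact h3

theorem rtr_nonneg {A : Matrix n n ℂ} (hA : A.PosSemidef) : 0 ≤ rtr A :=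
  (Complex.le_def.1 hA.trace_nonneg).1

theorem rtr_sub (A B : Matrix n n ℂ) : rtr (A - B) = rtr A - rtr B := by
  simp [rtr]

theorem gP_pos {α : ℝ} {ρ σ : Matrix n n ℂ}
    (hρ : ρ.PosSemidef) (hσ : σ.PosSemidef) (h : SuppLE ρ σ) (h0 : ρ ≠ 0) :
    0 < rtr (gP α ρ σ) := by
  have pP := gP_psd α (σ := σ) hρ
  refine lt_of_le_of_ne (rtr_nonneg pP) fun hz => h0 ?_
  have h1 : (gP α ρ σ).trace = 0 := by
    apply Complex.ext
    · exact hz.symm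
    · exact (Complex.le_def.1 pP.trace_nonneg).2.symm
  rw [pP.trace_eq_zero_iff] at h1
  set T := gT ρ σ with hT
  have pT : T.PosSemidef := gT_psd hρ
  have hQT : mpow σ 0 * T = T := by
    rw [hT]; unfold gT; simp only [← Matrix.mul_assoc]; rw [zero_mul_mpow hσ]
  have hTQ : T * mpow σ 0 = T := by
    rw [hT]; unfold gT; simp only [Matrix.mul_assoc]; rw [mpow_mul_zero hσ]
  have t1 : mpow T α = T * mpow T (α - 1) := by
    conv_rhs => rw [show T * mpow T (α - 1) = mpow T 1 * mpow T (α - 1) by rw [mpow_one pT]]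
    rw [mpow_mul pT]; congr 1; ring
  have t2 : mpow T α = mpow T (α - 1) * T := by
    conv_rhs => rw [show mpow T (α - 1) * T = mpow T (α - 1) * mpow T 1 by rw [mpow_one pT]]
    rw [mpow_mul pT]; congr 1; ring
  have h2 : mpow T α = 0 := by
    have h3 : mpow σ (-(1/2) : ℝ) * gP α ρ σ * mpow σ (-(1/2) : ℝ) = mpow T α := by
      have : mpow σ (-(1/2) : ℝ) * gP α ρ σ * mpow σ (-(1/2) : ℝ) =
        (mpow σ (-(1/2) : ℝ) * mpow σ (1/2 : ℝ)) * mpow T α *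
          (mpow σ (1/2 : ℝ) * mpow σ (-(1/2) : ℝ)) := by
        unfold gP; simp only [Matrix.mul_assoc]; rfl
      rw [this, half_mul_neg hσ, neg_mul_half hσ]
      rw [t1, ← Matrix.mul_assoc, hQT, ← t1, t2, Matrix.mul_assoc, hTQ]
    rw [← h3, h1]; simp
  have h4 : T = 0 := by
    have := mpow_mul pT α (1 - α)
    rw [h2, add_sub_cancel, mpow_one pT, Matrix.zero_mul] at this
    exact this.symm
  rw [← half_gT_half hρ hσ h, ← hT, h4]
  simp

theorem gT_kron {ρ σ : Matrix n n ℂ} {ρ' σ' : Matrix m m ℂ} (hσ : σ.PosSemidef)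
    (hσ' : σ'.PosSemidef) : gT (ρ ⊗ₖ ρ') (σ ⊗ₖ σ') = gT ρ σ ⊗ₖ gT ρ' σ' := by
  unfold gT
  rw [mpow_kron _ hσ hσ', mul_kronecker_mul, mul_kronecker_mul]

theorem gP_kron (α : ℝ) {ρ σ : Matrix n n ℂ} {ρ' σ' : Matrix m m ℂ} (hρ : ρ.PosSemidef)
    (hρ' : ρ'.PosSemidef) (hσ : σ.PosSemidef)
    (hσ' : σ'.PosSemidef) : gP α (ρ ⊗ₖ ρ') (σ ⊗ₖ σ') = gP α ρ σ ⊗ₖ gP α ρ' σ' := by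
  unfold gP
  rw [gT_kron hσ hσ', mpow_kron _ hσ hσ', mpow_kron _ (gT_psd hρ) (gT_psd hρ'),
    mul_kronecker_mul, mul_kronecker_mul]

theorem gT_one : gT (1 : Matrix n n ℂ) 1 = 1 := by
  simp [gT, mpow_one_mat]

theorem gP_one (α : ℝ) : gP α (1 : Matrix n n ℂ) 1 = 1 := by
  simp [gP, gT_one, mpow_one_mat]

theorem gP_submatrix (α : ℝ) {ρ σ : Matrix n n ℂ} (hρ : ρ.PosSemidef) (hσ : σ.PosSemidef)
    (e : m ≃ n) : gP α (ρ.submatrix e e) (σ.submatrix e e) = (gP α ρ σ).submatrix e e := by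
  have h1 : gT (ρ.submatrix e e) (σ.submatrix e e) = (gT ρ σ).submatrix e e := by
    unfold gT
    rw [mpow_submatrix hσ.1, submatrix_mul_equiv, submatrix_mul_equiv]
  unfold gP
  rw [h1, mpow_submatrix hσ.1, mpow_submatrix (gT_psd hρ).1, submatrix_mul_equiv,
    submatrix_mul_equiv]

theorem suppLE_submatrix {ρ σ : Matrix n n ℂ} (e : m ≃ n) :
    SuppLE (ρ.submatrix e e) (σ.submatrix e e) ↔ SuppLE ρ σ := by
  constructor
  · intro h v hv
    have := h (v ∘ e) (by
      rw [submatrix_mulVec_equiv]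
      ext i
      simp [Function.comp_assoc, hv])
    rw [submatrix_mulVec_equiv] at this
    ext i
    have := congrFun this (e.symm i)
    simpa [Function.comp_assoc] using this
  · intro h v hv
    rw [submatrix_mulVec_equiv] at hv ⊢
    have := h (v ∘ e.symm) (by
      ext i
      have := congrFun hv (e.symm i)
      simpa using this)
    ext i
    simp [this]

theorem rtr_submatrix (A : Matrix n n ℂ) (e : m ≃ n) : rtr (A.submatrix e e) = rtr A := by
  unfold rtr Matrix.trace
  simp only [diag_apply, submatrix_apply]
  rw [e.sum_comp (fun i => A i i)]

theorem geomRenyi_eq (α : ℝ) {ρ σ : Matrix n n ℂ} (hσ : σ.PosSemidef) (h : SuppLE ρ σ) :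
    geomRenyi α ρ σ = (((α - 1)⁻¹ : ℝ) : EReal) * elog (rtr (gP α ρ σ)) := by
  unfold geomRenyi
  rw [if_pos h, trace_gP α hσ]

theorem geomRenyi_submatrix (α : ℝ) {ρ σ : Matrix n n ℂ} (hρ : ρ.PosSemidef) (hσ : σ.PosSemidef)
    (e : m ≃ n) : geomRenyi α (ρ.submatrix e e) (σ.submatrix e e) = geomRenyi α ρ σ := by
  by_cases h : SuppLE ρ σ
  · rw [geomRenyi_eq α hσ h, geomRenyi_eq α (hσ.submatrix e) ((suppLE_submatrix e).2 h),
      gP_submatrix α hρ hσ, rtr_submatrix]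
  · unfold geomRenyi
    rw [if_neg h, if_neg (fun h' => h ((suppLE_submatrix e).1 h'))]

theorem suppLE_kron {ρ σ : Matrix n n ℂ} {ρ' σ' : Matrix m m ℂ} (hσ : σ.PosSemidef)
    (hσ' : σ'.PosSemidef) (h : SuppLE ρ σ) (h' : SuppLE ρ' σ') :
    SuppLE (ρ ⊗ₖ ρ') (σ ⊗ₖ σ') := by
  intro v hv
  have h1 : (ρ ⊗ₖ ρ') = (ρ ⊗ₖ ρ') * (mpow σ (-1) ⊗ₖ mpow σ' (-1)) * (σ ⊗ₖ σ') := by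
    rw [← mul_kronecker_mul, ← mul_kronecker_mul]
    congr 1
    · have := mpow_mul hσ (-1) 1
      rw [mpow_one hσ, neg_add_cancel] at this
      rw [Matrix.mul_assoc, this, supp_mul_proj hσ h]
    · have := mpow_mul hσ' (-1) 1
      rw [mpow_one hσ', neg_add_cancel] at this
      rw [Matrix.mul_assoc, this, supp_mul_proj hσ' h']
  rw [h1, ← mulVec_mulVec, hv, mulVec_zero]

theorem suppLE_kron_left {ρ σ : Matrix n n ℂ} {ρ' σ' : Matrix m m ℂ} (h0 : ρ' ≠ 0)
    (h : SuppLE (ρ ⊗ₖ ρ') (σ ⊗ₖ σ')) : SuppLE ρ σ := by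
  intro v hv
  have : ∃ i j, ρ' i j ≠ 0 := by
    by_contra hc
    push Not at hc
    exact h0 (by ext i j; exact hc i j)
  obtain ⟨a, b, hab⟩ := this
  have key : ∀ (A : Matrix n n ℂ) (B : Matrix m m ℂ) (p : n × m),
      ((A ⊗ₖ B) *ᵥ (fun q : n × m => v q.1 * (if q.2 = b then 1 else 0))) p =
        (A *ᵥ v) p.1 * B p.2 b := by
    intro A B p
    simp only [mulVec, dotProduct, kroneckerMap_apply, Fintype.sum_prod_type, Finset.sum_mul]
    refine Finset.sum_congr rfl fun i _ => ?_
    simp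
    ring
  have h1 := h (fun q : n × m => v q.1 * (if q.2 = b then 1 else 0)) (by
    ext p
    rw [key, hv]; simp)
  ext i
  have h2 := congrFun h1 (i, a)
  rw [key] at h2
  simpa [hab] using h2

theorem suppLE_kron_right {ρ σ : Matrix n n ℂ} {ρ' σ' : Matrix m m ℂ} (h0 : ρ ≠ 0)
    (h : SuppLE (ρ ⊗ₖ ρ') (σ ⊗ₖ σ')) : SuppLE ρ' σ' := by
  have h1 := (suppLE_submatrix (Equiv.prodComm m n)).2 h
  refine suppLE_kron_left (ρ := ρ') (σ := σ') (ρ' := ρ) (σ' := σ) h0 ?_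
  convert h1 using 1
  · ext p q; simp [mul_comm]
  · ext p q; simp [mul_comm]

theorem rtr_kron {A : Matrix n n ℂ} {B : Matrix m m ℂ} (hA : A.PosSemidef) (_hB : B.PosSemidef) :
    rtr (A ⊗ₖ B) = rtr A * rtr B := by
  unfold rtr
  rw [trace_kronecker, Complex.mul_re, ← (Complex.le_def.1 hA.trace_nonneg).2]
  simp

theorem geomRenyi_coe {α : ℝ} {ρ σ : Matrix n n ℂ} (hρ : ρ.PosSemidef)
    (hσ : σ.PosSemidef) (h : SuppLE ρ σ) (h0 : ρ ≠ 0) :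
    geomRenyi α ρ σ = (((α - 1)⁻¹ * Real.logb 2 (rtr (gP α ρ σ)) : ℝ) : EReal) := by
  rw [geomRenyi_eq α hσ h, elog, if_neg (not_le.2 (gP_pos hρ hσ h h0)), EReal.coe_mul]

theorem geomRenyi_kron_ge (α : ℝ) {ρ σ : Matrix n n ℂ} {ρ' σ' : Matrix m m ℂ} (hρ : ρ.PosSemidef)
    (hρ' : ρ'.PosSemidef) (hσ : σ.PosSemidef) (hσ' : σ'.PosSemidef) (h0 : ρ ≠ 0) (h0' : ρ' ≠ 0) :
    geomRenyi α ρ σ + geomRenyi α ρ' σ' ≤ geomRenyi α (ρ ⊗ₖ ρ') (σ ⊗ₖ σ') := by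
  by_cases h : SuppLE (ρ ⊗ₖ ρ') (σ ⊗ₖ σ')
  · have h1 := suppLE_kron_left h0' h
    have h2 := suppLE_kron_right h0 h
    have p1 := gP_pos (α := α) hρ hσ h1 h0
    have p2 := gP_pos (α := α) hρ' hσ' h2 h0'
    rw [geomRenyi_coe hρ hσ h1 h0, geomRenyi_coe hρ' hσ' h2 h0', geomRenyi_eq _ (hσ.kronecker hσ') h,
      gP_kron _ hρ hρ' hσ hσ', rtr_kron (gP_psd _ hρ) (gP_psd _ hρ'), elog,
      if_neg (not_le.2 (mul_pos p1 p2)), Real.logb_mul p1.ne' p2.ne', ← EReal.coe_mul,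
      ← EReal.coe_add, mul_add]
  · unfold geomRenyi
    rw [if_neg h]
    exact le_top

end Part2
end QCD

namespace QCD
section Part3

set_option linter.unusedSectionVars false

open Matrix
open scoped Kronecker ComplexOrder

variable {n m k r n₁ n₂ m₁ m₂ k₁ k₂ : Type} [Fintype n] [DecidableEq n] [Fintype m] [DecidableEq m]
  [Fintype k] [DecidableEq k] [Fintype r] [DecidableEq r]
  [Fintype n₁] [DecidableEq n₁] [Fintype n₂] [DecidableEq n₂]
  [Fintype m₁] [DecidableEq m₁] [Fintype m₂] [DecidableEq m₂]

theorem one_prod_apply (p q : n × m) : (1 : Matrix (n × m) (n × m) ℂ) p q =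
    (1 : Matrix n n ℂ) p.1 q.1 * (1 : Matrix m m ℂ) p.2 q.2 := by
  rw [← one_kronecker_one]; rfl

/-- Choi matrix. -/
def choi (E : Matrix n n ℂ →ₗ[ℂ] Matrix m m ℂ) : Matrix (n × m) (n × m) ℂ :=
  Matrix.of fun p q => E (Matrix.single p.1 q.1 1) p.2 q.2

/-- Action of a Choi matrix on a bipartite matrix. -/
def act (ν : Matrix (k × n) (k × n) ℂ) (C : Matrix (n × m) (n × m) ℂ) :
    Matrix (k × m) (k × m) ℂ :=
  Matrix.of fun p q => ∑ i, ∑ j, ν (p.1, i) (q.1, j) * C (i, p.2) (j, q.2)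

/-- Partial trace over the second factor. -/
def ptr (C : Matrix (n × m) (n × m) ℂ) : Matrix n n ℂ :=
  Matrix.of fun i j => ∑ a, C (i, a) (j, a)

theorem blockApply_eq_act (E : Matrix n n ℂ →ₗ[ℂ] Matrix m m ℂ) (ν : Matrix (k × n) (k × n) ℂ) :
    blockApply E ν = act ν (choi E) := by
  ext p q
  simp only [blockApply, act, choi, of_apply]
  conv_lhs => rw [matrix_eq_sum_single (of fun a b => ν (p.1, a) (q.1, b))]
  simp only [map_sum, Matrix.sum_apply, of_apply]
  refine Finset.sum_congr rfl fun i _ => Finset.sum_congr rfl fun j _ => ?_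
  have : single i j (ν (p.1, i) (q.1, j)) = ν (p.1, i) (q.1, j) • single i j (1 : ℂ) := by
    simp [smul_single]
  rw [this, map_smul]
  rfl

/-- Dilation matrix. -/
def dil (m : Type) [DecidableEq m] (B : Matrix (k × n) r ℂ) : Matrix (k × m) (r × (n × m)) ℂ :=
  Matrix.of fun p q => B (p.1, q.2.1) q.1 * (if p.2 = q.2.2 then 1 else 0)

theorem act_dil (B : Matrix (k × n) r ℂ) (C : Matrix (n × m) (n × m) ℂ) :
    act (B * Bᴴ) C = dil m B * ((1 : Matrix r r ℂ) ⊗ₖ C) * (dil m B)ᴴ := by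
  ext ⟨p, a⟩ ⟨q, b⟩
  simp only [act, dil, of_apply, Matrix.mul_apply, conjTranspose_apply, kroneckerMap_apply,
    Fintype.sum_prod_type, Finset.sum_mul, one_apply]
  simp only [star_mul', apply_ite star, star_one, star_zero, mul_ite, mul_one, mul_zero,
    ite_mul, zero_mul, one_mul, Finset.sum_ite_eq, Finset.mem_univ, if_true]
  simp only [Finset.sum_ite_irrel, Finset.sum_const_zero, Finset.sum_ite_eq, Finset.sum_ite_eq',
    Finset.mem_univ, if_true]
  rw [Finset.sum_comm]
  refine (Finset.sum_congr rfl fun j _ => Finset.sum_comm).trans ?_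
  rw [Finset.sum_comm]
  refine Finset.sum_congr rfl fun c _ => Finset.sum_congr rfl fun j _ => ?_
  simp [Finset.sum_mul]
  refine Finset.sum_congr rfl fun i _ => ?_
  ring

theorem trace_act (ν : Matrix (k × n) (k × n) ℂ) (C : Matrix (n × m) (n × m) ℂ) :
    (act ν C).trace = (ν * ((1 : Matrix k k ℂ) ⊗ₖ (ptr C)ᵀ)).trace := by
  simp only [Matrix.trace, diag_apply, act, ptr, of_apply, Matrix.mul_apply, kroneckerMap_apply,
    transpose_apply, one_apply, Fintype.sum_prod_type]
  refine Finset.sum_congr rfl fun p _ => ?_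
  rw [Finset.sum_comm]
  refine Finset.sum_congr rfl fun i _ => ?_
  rw [Finset.sum_comm]
  simp only [ite_mul, one_mul, zero_mul, mul_ite, mul_zero, Finset.sum_ite_irrel,
    Finset.sum_const_zero, Finset.sum_ite_eq', Finset.mem_univ, if_true, Finset.mul_sum]

theorem rtr_act_le {ν : Matrix (k × n) (k × n) ℂ} (hν : IsState ν) (C : Matrix (n × m) (n × m) ℂ)
    (L : ℝ) (h : ((L : ℂ) • (1 : Matrix n n ℂ) - ptr C).PosSemidef) : rtr (act ν C) ≤ L := by
  have hK : ((1 : Matrix k k ℂ) ⊗ₖ ((L : ℂ) • (1 : Matrix n n ℂ) - ptr C)ᵀ).PosSemidef :=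
    PosSemidef.one.kronecker h.transpose
  set S := mpow ν (1/2 : ℝ)
  have hp := psd_conj_herm hK (mpow_herm ν (1/2 : ℝ))
  have h1 := rtr_nonneg hp
  have h2 : rtr (S * ((1 : Matrix k k ℂ) ⊗ₖ ((L : ℂ) • (1 : Matrix n n ℂ) - ptr C)ᵀ) * S)
      = L - rtr (act ν C) := by
    unfold rtr
    rw [trace_mul_comm, ← Matrix.mul_assoc, half_mul_half hν.1, trace_act]
    have h3 : (1 : Matrix k k ℂ) ⊗ₖ ((L : ℂ) • (1 : Matrix n n ℂ) - ptr C)ᵀ =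
      (L : ℂ) • 1 - (1 : Matrix k k ℂ) ⊗ₖ (ptr C)ᵀ := by
      rw [transpose_sub, transpose_smul, transpose_one]
      ext p q
      simp [Matrix.sub_apply, mul_sub]
      rw [one_prod_apply]
      ring
    rw [h3, Matrix.mul_sub, trace_sub]
    simp [hν.2]
  linarith [h2 ▸ h1]

/-- Claim B: upper bound. -/
theorem claimB {α : ℝ} (hα : 1 < α) (hα2 : α ≤ 2) {E F : Matrix n n ℂ →ₗ[ℂ] Matrix m m ℂ}
    (hE : (choi E).PosSemidef) (hF : (choi F).PosSemidef) (hs : SuppLE (choi E) (choi F))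
    (L : ℝ) (hL : ((L : ℂ) • (1 : Matrix n n ℂ) - ptr (gP α (choi E) (choi F))).PosSemidef)
    {ν : Matrix (k × n) (k × n) ℂ} (hν : IsState ν) :
    (blockApply E ν).PosSemidef ∧ (blockApply F ν).PosSemidef ∧
    SuppLE (blockApply E ν) (blockApply F ν) ∧
      rtr (gP α (blockApply E ν) (blockApply F ν)) ≤ L := by
  set B := mpow ν (1/2 : ℝ) with hB
  have hBB : B * Bᴴ = ν := by rw [(mpow_herm _ _).eq]; exact half_mul_half hν.1
  have e : ∀ C : Matrix (n × m) (n × m) ℂ,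
      act ν C = dil m B * ((1 : Matrix (k × n) (k × n) ℂ) ⊗ₖ C) * (dil m B)ᴴ := by
    intro C; rw [← act_dil, hBB]
  have p1 : ((1 : Matrix (k × n) (k × n) ℂ) ⊗ₖ choi E).PosSemidef := PosSemidef.one.kronecker hE
  have p2 : ((1 : Matrix (k × n) (k × n) ℂ) ⊗ₖ choi F).PosSemidef := PosSemidef.one.kronecker hF
  have hs' : SuppLE ((1 : Matrix (k × n) (k × n) ℂ) ⊗ₖ choi E)
    ((1 : Matrix (k × n) (k × n) ℂ) ⊗ₖ choi F) :=
    suppLE_kron PosSemidef.one hF (fun v hv => hv) hs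
  rw [blockApply_eq_act, blockApply_eq_act]
  refine ⟨?_, ?_, ?_, ?_⟩
  · rw [e]; exact psd_conj p1 _
  · rw [e]; exact psd_conj p2 _
  · rw [e, e]; exact suppLE_conj p2 hs' _
  · have h1 := rtr_nonneg (gP_transformer hα hα2 p1 p2 hs' (dil m B))
    rw [gP_kron α PosSemidef.one hE PosSemidef.one hF, gP_one, ← e, ← e, ← e, rtr_sub] at h1
    have := rtr_act_le hν _ L hL
    linarith

theorem psd_of_invertible_test {N : Matrix n n ℂ} (hN : N.IsHermitian)
    (h : ∀ X : Matrix n n ℂ, X.PosDef → 0 ≤ rtr (X * N * Xᴴ)) : N.PosSemidef := by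
  refine PosSemidef.of_dotProduct_mulVec_nonneg hN fun v => ?_
  by_cases hv : v = 0
  · simp [hv]
  have hf : Continuous (fun ε : ℝ => rtr (((ε : ℂ) • (1 : Matrix n n ℂ) + vecMulVec v (star v)) * N *
      ((ε : ℂ) • (1 : Matrix n n ℂ) + vecMulVec v (star v))ᴴ)) := by
    unfold rtr
    refine Complex.continuous_re.comp ?_
    apply Continuous.matrix_trace
    have : Continuous fun ε : ℝ => ((ε : ℂ) • (1 : Matrix n n ℂ) + vecMulVec v (star v)) :=
      ((Complex.continuous_ofReal).smul continuous_const).add continuous_const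
    exact (this.matrix_mul continuous_const).matrix_mul this.matrix_conjTranspose
  have h0 : 0 ≤ rtr ((((0 : ℝ) : ℂ) • (1 : Matrix n n ℂ) + vecMulVec v (star v)) * N *
      (((0 : ℝ) : ℂ) • (1 : Matrix n n ℂ) + vecMulVec v (star v))ᴴ) := by
    have ht := (hf.tendsto 0).mono_left (nhdsWithin_le_nhds (s := Set.Ioi (0 : ℝ)))
    refine ge_of_tendsto ht ?_
    filter_upwards [self_mem_nhdsWithin] with ε hε
    apply h
    refine PosDef.add_posSemidef ?_ (posSemidef_vecMulVec_self_star v)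
    refine PosDef.smul PosDef.one ?_
    exact_mod_cast hε
  have h1 : (vecMulVec v (star v) * N * (vecMulVec v (star v))ᴴ).trace =
      (star v ⬝ᵥ v) * (star v ⬝ᵥ (N *ᵥ v)) := by
    rw [(posSemidef_vecMulVec_self_star v).1.eq, trace_mul_comm, ← Matrix.mul_assoc,
      vecMulVec_mul_vecMulVec, vecMulVec_smul, Matrix.smul_mul, trace_smul, vecMulVec_mul, trace_vecMulVec,
      dotProduct_comm v, dotProduct_mulVec]
    simp
  have hpos : 0 < star v ⬝ᵥ v := by
    have := dotProduct_star_self_pos_iff.2 hv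
    exact (dotProduct_comm v (star v)) ▸ this
  obtain ⟨hp1, hp2⟩ := Complex.lt_def.1 hpos
  simp only [Complex.ofReal_zero, zero_smul, zero_add] at h0
  unfold rtr at h0
  rw [h1, Complex.mul_re, ← hp2] at h0
  simp only [Complex.zero_im, zero_mul, sub_zero] at h0
  have h2 : 0 ≤ (star v ⬝ᵥ (N *ᵥ v)).re := nonneg_of_mul_nonneg_right h0 hp1
  refine Complex.le_def.2 ⟨h2, ?_⟩
  have h3 := hN.im_star_dotProduct_mulVec_self v
  simpa using h3.symm

/-- Pure state input attached to a matrix. -/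
def pureIn (X : Matrix n n ℂ) : Matrix (n × n) (n × n) ℂ :=
  vecMulVec (fun p => X p.1 p.2) (star (fun p => X p.1 p.2))

theorem act_pureIn (X : Matrix n n ℂ) (C : Matrix (n × m) (n × m) ℂ) :
    act (pureIn X) C = (X ⊗ₖ (1 : Matrix m m ℂ)) * C * (X ⊗ₖ (1 : Matrix m m ℂ))ᴴ := by
  ext ⟨p, a⟩ ⟨q, b⟩
  simp only [act, pureIn, of_apply, Matrix.mul_apply, conjTranspose_apply, kroneckerMap_apply,
    Fintype.sum_prod_type, vecMulVec_apply, one_apply, Pi.star_apply]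
  simp only [star_mul', apply_ite star, star_one, star_zero, mul_ite, mul_one, mul_zero,
    ite_mul, zero_mul, one_mul, Finset.sum_ite_eq, Finset.mem_univ, if_true, Finset.sum_mul]
  rw [Finset.sum_comm]
  refine Finset.sum_congr rfl fun i _ => ?_
  refine Finset.sum_congr rfl fun j _ => ?_
  ring

theorem trace_conj_kron (X : Matrix n n ℂ) (C : Matrix (n × m) (n × m) ℂ) :
    ((X ⊗ₖ (1 : Matrix m m ℂ)) * C * (X ⊗ₖ (1 : Matrix m m ℂ))ᴴ).trace =
      (X * ptr C * Xᴴ).trace := by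
  rw [← act_pureIn]
  simp only [Matrix.trace, diag_apply, act, pureIn, ptr, of_apply, Matrix.mul_apply,
    conjTranspose_apply, Fintype.sum_prod_type, vecMulVec_apply, Pi.star_apply]
  refine Finset.sum_congr rfl fun p _ => ?_
  rw [Finset.sum_comm]
  simp only [Finset.sum_mul, Finset.mul_sum]
  rw [Finset.sum_comm]
  refine (Finset.sum_congr rfl fun i _ => Finset.sum_comm).trans ?_
  rw [Finset.sum_comm]
  refine Finset.sum_congr rfl fun j _ => ?_
  rw [Finset.sum_comm]
  refine Finset.sum_congr rfl fun i _ => Finset.sum_congr rfl fun a _ => ?_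
  ring

theorem trace_pureIn (X : Matrix n n ℂ) : (pureIn X).trace = (X * Xᴴ).trace := by
  simp [Matrix.trace, pureIn, vecMulVec_apply, Matrix.mul_apply, Fintype.sum_prod_type]

theorem ptr_psd {C : Matrix (n × m) (n × m) ℂ} (hC : C.PosSemidef) : (ptr C).PosSemidef := by
  have : ptr C = ∑ a, C.submatrix (fun i => (i, a)) (fun i => (i, a)) := by
    ext i j; simp [ptr, Matrix.sum_apply]
  rw [this]
  exact posSemidef_sum _ fun a _ => hC.submatrix _

/-- Claim A: lower bound. -/
theorem claimA {α : ℝ} (hα : 1 < α) (hα2 : α ≤ 2) {E F : Matrix n n ℂ →ₗ[ℂ] Matrix m m ℂ}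
    (hE : (choi E).PosSemidef) (hF : (choi F).PosSemidef) (hs : SuppLE (choi E) (choi F))
    (L : ℝ) (hL : ∀ ν : Matrix (n × n) (n × n) ℂ, IsState ν →
      rtr (gP α (blockApply E ν) (blockApply F ν)) ≤ L) :
    ((L : ℂ) • (1 : Matrix n n ℂ) - ptr (gP α (choi E) (choi F))).PosSemidef := by
  have hG := ptr_psd (gP_psd α (σ := choi F) hE)
  refine psd_of_invertible_test ?_ fun X hX => ?_
  · have : ((L : ℂ) • (1 : Matrix n n ℂ)).IsHermitian := by
      rw [IsHermitian, conjTranspose_smul]; simp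
    exact this.sub hG.1
  -- normalized version
  have key : ∀ Y Y' : Matrix n n ℂ, Y' * Y = 1 → (Y * Yᴴ).trace = 1 →
      rtr (Y * ptr (gP α (choi E) (choi F)) * Yᴴ) ≤ L := by
    intro Y Y' hY hT
    have h1 := hL (pureIn Y) ⟨posSemidef_vecMulVec_self_star _, by rw [trace_pureIn, hT]⟩
    rw [blockApply_eq_act, blockApply_eq_act, act_pureIn, act_pureIn,
      ← gP_transformer_eq hα hα2 hE hF hs _ (Y' ⊗ₖ (1 : Matrix m m ℂ))
        (by rw [← mul_kronecker_mul, hY, Matrix.one_mul, one_kronecker_one])] at h1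
    unfold rtr at h1 ⊢
    rwa [trace_conj_kron] at h1
  obtain ⟨u, hu⟩ := hX.isUnit
  have hinv : (↑u⁻¹ : Matrix n n ℂ) * X = 1 := by rw [← hu]; simp
  by_cases hz : X = 0
  · rw [hz]; simp [rtr]
  have pXX := posSemidef_self_mul_conjTranspose X
  have htr0 : (X * Xᴴ).trace ≠ 0 := by
    rw [Ne, pXX.trace_eq_zero_iff, self_mul_conjTranspose_eq_zero]; exact hz
  set c := rtr (X * Xᴴ) with hc
  have hcc : (X * Xᴴ).trace = (c : ℂ) := by
    apply Complex.ext
    · rfl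
    · exact (Complex.le_def.1 pXX.trace_nonneg).2.symm
  have hcpos : 0 < c := by
    refine lt_of_le_of_ne (rtr_nonneg pXX) fun h => htr0 ?_
    rw [hcc, ← h]; simp
  have hsq : Real.sqrt c ≠ 0 := (Real.sqrt_pos.2 hcpos).ne'
  have hsm : ∀ Z : Matrix n n ℂ, (((Real.sqrt c)⁻¹ : ℝ) : ℂ) • X * Z *
      ((((Real.sqrt c)⁻¹ : ℝ) : ℂ) • X)ᴴ = ((c⁻¹ : ℝ) : ℂ) • (X * Z * Xᴴ) := by
    intro Z
    rw [conjTranspose_smul, Matrix.smul_mul, Matrix.smul_mul, Matrix.mul_smul, smul_smul]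
    congr 1
    rw [RCLike.star_def, Complex.conj_ofReal, ← Complex.ofReal_mul, ← mul_inv,
      Real.mul_self_sqrt hcpos.le]
  have h2 := key ((((Real.sqrt c)⁻¹ : ℝ) : ℂ) • X) (((Real.sqrt c : ℝ) : ℂ) • (↑u⁻¹ : Matrix n n ℂ))
    (by
      rw [Matrix.smul_mul, Matrix.mul_smul, smul_smul, hinv, ← Complex.ofReal_mul,
        mul_inv_cancel₀ hsq]; simp)
    (by
      have := hsm 1
      rw [Matrix.mul_one, Matrix.mul_one] at this
      rw [this, trace_smul, hcc, smul_eq_mul, ← Complex.ofReal_mul, inv_mul_cancel₀ hcpos.ne']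
      simp)
  rw [hsm] at h2
  unfold rtr at h2
  rw [trace_smul, smul_eq_mul, Complex.re_ofReal_mul, inv_mul_le_iff₀ hcpos] at h2
  rw [Matrix.mul_sub, Matrix.sub_mul, rtr_sub, Matrix.mul_smul, Matrix.mul_one, Matrix.smul_mul]
  unfold rtr
  rw [trace_smul, hcc, smul_eq_mul, ← Complex.ofReal_mul, Complex.ofReal_re]
  linarith

theorem tensor_kron (E₁ : Matrix n₁ n₁ ℂ →ₗ[ℂ] Matrix m₁ m₁ ℂ)
    (E₂ : Matrix n₂ n₂ ℂ →ₗ[ℂ] Matrix m₂ m₂ ℂ) (A : Matrix n₁ n₁ ℂ) (B : Matrix n₂ n₂ ℂ) :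
    tensorChannel E₁ E₂ (A ⊗ₖ B) = E₁ A ⊗ₖ E₂ B := by
  ext ⟨a, b⟩ ⟨a', b'⟩
  have h1 : ∀ p q : n₁, ∀ c c', blockApply E₂ (A ⊗ₖ B) (p, c) (q, c') = A p q * E₂ B c c' := by
    intro p q c c'
    simp only [blockApply, of_apply]
    have : (of fun a b => (A ⊗ₖ B) (p, a) (q, b)) = A p q • B := by
      ext i j; simp
    rw [this, map_smul]; rfl
  show E₁ (of fun p q => blockApply E₂ (A ⊗ₖ B) (p, b) (q, b')) a a' = _
  have h2 : (of fun p q => blockApply E₂ (A ⊗ₖ B) (p, b) (q, b')) = E₂ B b b' • A := by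
    ext p q; simp [h1, mul_comm]
  rw [h2, map_smul]
  simp [mul_comm]

theorem choi_tensor (E₁ : Matrix n₁ n₁ ℂ →ₗ[ℂ] Matrix m₁ m₁ ℂ)
    (E₂ : Matrix n₂ n₂ ℂ →ₗ[ℂ] Matrix m₂ m₂ ℂ) :
    choi (tensorChannel E₁ E₂) = (choi E₁ ⊗ₖ choi E₂).submatrix
      (Equiv.prodProdProdComm n₁ n₂ m₁ m₂) (Equiv.prodProdProdComm n₁ n₂ m₁ m₂) := by
  ext ⟨⟨i, i'⟩, ⟨a, a'⟩⟩ ⟨⟨j, j'⟩, ⟨b, b'⟩⟩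
  have : (single (i, i') (j, j') (1 : ℂ)) = single i j 1 ⊗ₖ single i' j' 1 := by
    rw [single_kronecker_single]; simp
  simp only [choi, of_apply, submatrix_apply, this, tensor_kron, kroneckerMap_apply,
    Equiv.prodProdProdComm_apply]

theorem ptr_kron (C₁ : Matrix (n₁ × m₁) (n₁ × m₁) ℂ) (C₂ : Matrix (n₂ × m₂) (n₂ × m₂) ℂ) :
    ptr ((C₁ ⊗ₖ C₂).submatrix
      (Equiv.prodProdProdComm n₁ n₂ m₁ m₂) (Equiv.prodProdProdComm n₁ n₂ m₁ m₂)) =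
      ptr C₁ ⊗ₖ ptr C₂ := by
  ext ⟨i, i'⟩ ⟨j, j'⟩
  simp [ptr, Fintype.sum_prod_type, Finset.sum_mul_sum]

theorem kron_le {M₁ : Matrix n₁ n₁ ℂ} {M₂ : Matrix n₂ n₂ ℂ} {L₁ L₂ : ℝ} (hM₂ : M₂.PosSemidef)
    (hL₁ : 0 ≤ L₁)
    (h₁ : ((L₁ : ℂ) • (1 : Matrix n₁ n₁ ℂ) - M₁).PosSemidef)
    (h₂ : ((L₂ : ℂ) • (1 : Matrix n₂ n₂ ℂ) - M₂).PosSemidef) :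
    (((L₁ * L₂ : ℝ) : ℂ) • (1 : Matrix (n₁ × n₂) (n₁ × n₂) ℂ) - M₁ ⊗ₖ M₂).PosSemidef := by
  have e : ((L₁ * L₂ : ℝ) : ℂ) • (1 : Matrix (n₁ × n₂) (n₁ × n₂) ℂ) - M₁ ⊗ₖ M₂ =
      ((L₁ : ℂ) • (1 : Matrix n₁ n₁ ℂ) - M₁) ⊗ₖ M₂ +
      ((L₁ : ℂ) • (1 : Matrix n₁ n₁ ℂ)) ⊗ₖ ((L₂ : ℂ) • (1 : Matrix n₂ n₂ ℂ) - M₂) := by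
    ext p q
    simp [Matrix.sub_apply, Matrix.add_apply]
    rw [one_prod_apply]
    ring
  rw [e]
  refine (h₁.kronecker hM₂).add (PosSemidef.kronecker ?_ h₂)
  exact PosSemidef.one.smul (by exact_mod_cast hL₁)

/-- The product reindexing. -/
def pe (a b : ℕ) (m₁ m₂ : Type) : Fin (a * b) × (m₁ × m₂) ≃ (Fin a × m₁) × (Fin b × m₂) :=
  (Equiv.prodCongr finProdFinEquiv.symm (Equiv.refl _)).trans
    (Equiv.prodProdProdComm (Fin a) (Fin b) m₁ m₂)

theorem blockApply_tensor {a b : ℕ} (E₁ : Matrix n₁ n₁ ℂ →ₗ[ℂ] Matrix m₁ m₁ ℂ)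
    (E₂ : Matrix n₂ n₂ ℂ →ₗ[ℂ] Matrix m₂ m₂ ℂ)
    (ν₁ : Matrix (Fin a × n₁) (Fin a × n₁) ℂ) (ν₂ : Matrix (Fin b × n₂) (Fin b × n₂) ℂ) :
    blockApply (tensorChannel E₁ E₂) ((ν₁ ⊗ₖ ν₂).submatrix (pe a b n₁ n₂) (pe a b n₁ n₂)) =
      (blockApply E₁ ν₁ ⊗ₖ blockApply E₂ ν₂).submatrix (pe a b m₁ m₂) (pe a b m₁ m₂) := by
  ext ⟨p, x, x'⟩ ⟨q, y, y'⟩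
  have h : (of fun u v => ((ν₁ ⊗ₖ ν₂).submatrix (pe a b n₁ n₂) (pe a b n₁ n₂)) (p, u) (q, v)) =
      (of fun u v => ν₁ ((finProdFinEquiv.symm p).1, u) ((finProdFinEquiv.symm q).1, v)) ⊗ₖ
      (of fun u v => ν₂ ((finProdFinEquiv.symm p).2, u) ((finProdFinEquiv.symm q).2, v)) := by
    ext ⟨i, i'⟩ ⟨j, j'⟩
    rfl
  show tensorChannel E₁ E₂ (of fun u v => ((ν₁ ⊗ₖ ν₂).submatrix (pe a b n₁ n₂) (pe a b n₁ n₂)) (p, u) (q, v)) (x, x') (y, y') = _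
  rw [h, tensor_kron]
  rfl

theorem trace_blockApply {E : Matrix n n ℂ →ₗ[ℂ] Matrix m m ℂ}
    (hE : ∀ M : Matrix n n ℂ, (E M).trace = M.trace) (ν : Matrix (k × n) (k × n) ℂ) :
    (blockApply E ν).trace = ν.trace := by
  have h1 : (blockApply E ν).trace = ∑ p, (E (of fun a b => ν (p, a) (p, b))).trace := by
    simp [Matrix.trace, blockApply, Fintype.sum_prod_type]
  rw [h1]
  simp only [hE]
  simp [Matrix.trace, Fintype.sum_prod_type]

end Part3
end QCD

namespace QCD
section Part4

open Matrix
open scoped Kronecker ComplexOrder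

theorem geomRenyi_le {n : Type} [Fintype n] [DecidableEq n] {α : ℝ} (hα : 1 < α)
    {ρ σ : Matrix n n ℂ} (hσ : σ.PosSemidef) (h : SuppLE ρ σ) {x : ℝ}
    (ht : rtr (gP α ρ σ) ≤ (2 : ℝ) ^ ((α - 1) * x)) : geomRenyi α ρ σ ≤ (x : EReal) := by
  have hα' : 0 < α - 1 := by linarith
  rw [geomRenyi_eq α hσ h, elog]
  split_ifs with h0
  · rw [EReal.coe_mul_bot_of_pos (inv_pos.2 hα')]; exact bot_le
  · rw [← EReal.coe_mul, EReal.coe_le_coe_iff, inv_mul_le_iff₀ hα']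
    rw [not_le] at h0
    exact (Real.logb_le_iff_le_rpow (by norm_num) h0).2 ht

theorem of_geomRenyi_le {n : Type} [Fintype n] [DecidableEq n] {α : ℝ} (hα : 1 < α)
    {ρ σ : Matrix n n ℂ} (hρ : ρ.PosSemidef) (hσ : σ.PosSemidef) (hρ0 : ρ ≠ 0) {x : ℝ}
    (hx : geomRenyi α ρ σ ≤ (x : EReal)) :
    SuppLE ρ σ ∧ rtr (gP α ρ σ) ≤ (2 : ℝ) ^ ((α - 1) * x) := by
  have hα' : 0 < α - 1 := by linarith
  have h : SuppLE ρ σ := by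
    by_contra h
    unfold geomRenyi at hx
    rw [if_neg h, top_le_iff] at hx
    exact EReal.coe_ne_top _ hx
  refine ⟨h, ?_⟩
  rw [geomRenyi_coe hρ hσ h hρ0, EReal.coe_le_coe_iff, inv_mul_le_iff₀ hα'] at hx
  exact (Real.logb_le_iff_le_rpow (by norm_num) (gP_pos hρ hσ h hρ0)).1 hx

theorem geomRenyi_ne_bot {n : Type} [Fintype n] [DecidableEq n] {α : ℝ}
    {ρ σ : Matrix n n ℂ} (hρ : ρ.PosSemidef) (hσ : σ.PosSemidef) (hρ0 : ρ ≠ 0) :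
    geomRenyi α ρ σ ≠ ⊥ := by
  by_cases h : SuppLE ρ σ
  · rw [geomRenyi_coe hρ hσ h hρ0]; exact EReal.coe_ne_bot _
  · unfold geomRenyi
    rw [if_neg h]; exact top_ne_bot

theorem geomRenyi_le_chDiv {n m : Type} [Fintype n] [DecidableEq n] [Fintype m] [DecidableEq m]
    (α : ℝ) (E F : Matrix n n ℂ →ₗ[ℂ] Matrix m m ℂ) {k : ℕ} (hk : 1 ≤ k)
    {ν : Matrix (Fin k × n) (Fin k × n) ℂ} (hν : IsState ν) :
    geomRenyi α (blockApply E ν) (blockApply F ν) ≤ chDiv (geomD α) E F := by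
  unfold chDiv
  exact le_iSup₂_of_le k hk (le_iSup₂_of_le ν hν le_rfl)

theorem blockApply_ne_zero {n m : Type} [Fintype n] [DecidableEq n] [Fintype m] [DecidableEq m]
    {E : Matrix n n ℂ →ₗ[ℂ] Matrix m m ℂ} (hE : IsQChannel E) {k : ℕ}
    {ν : Matrix (Fin k × n) (Fin k × n) ℂ} (hν : IsState ν) : blockApply E ν ≠ 0 := by
  intro h
  have h1 := trace_blockApply hE.1 ν
  rw [h, hν.2, trace_zero] at h1
  exact zero_ne_one h1

theorem choi_psd {d d' : ℕ} (hd : 1 ≤ d)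
    {E : Matrix (Fin d) (Fin d) ℂ →ₗ[ℂ] Matrix (Fin d') (Fin d') ℂ} (hE : IsQChannel E) :
    (choi E).PosSemidef := by
  have h := hE.2 d hd (pureIn 1) (posSemidef_vecMulVec_self_star _)
  rw [blockApply_eq_act, act_pureIn] at h
  simpa using h

theorem exists_state {d : ℕ} (hd : 1 ≤ d) :
    IsState (((d : ℂ)⁻¹) • pureIn (1 : Matrix (Fin d) (Fin d) ℂ)) := by
  have hd' : (d : ℂ) ≠ 0 := by exact_mod_cast (by omega : d ≠ 0)
  refine ⟨PosSemidef.smul (posSemidef_vecMulVec_self_star _) ?_, ?_⟩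
  · rw [inv_nonneg]; exact_mod_cast Nat.zero_le d
  · rw [trace_smul, trace_pureIn]
    simp [hd']

theorem single_channel {d d' : ℕ} (hd : 1 ≤ d) {α : ℝ} (hα : 1 < α) (hα2 : α ≤ 2)
    {E F : Matrix (Fin d) (Fin d) ℂ →ₗ[ℂ] Matrix (Fin d') (Fin d') ℂ}
    (hE : IsQChannel E) (hF : IsQChannel F) :
    chDiv (geomD α) E F ≠ ⊥ ∧ ∀ x : ℝ, chDiv (geomD α) E F ≤ (x : EReal) →
      SuppLE (choi E) (choi F) ∧
      ((((2 : ℝ) ^ ((α - 1) * x) : ℝ) : ℂ) • (1 : Matrix (Fin d) (Fin d) ℂ) -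
        ptr (gP α (choi E) (choi F))).PosSemidef := by
  have hst := exists_state hd
  have hb : ∀ ν : Matrix (Fin d × Fin d) (Fin d × Fin d) ℂ, IsState ν → ∀ x : ℝ,
      chDiv (geomD α) E F ≤ (x : EReal) →
      SuppLE (blockApply E ν) (blockApply F ν) ∧
        rtr (gP α (blockApply E ν) (blockApply F ν)) ≤ (2 : ℝ) ^ ((α - 1) * x) := by
    intro ν hν x hx
    exact of_geomRenyi_le hα (hE.2 d hd ν hν.1) (hF.2 d hd ν hν.1) (blockApply_ne_zero hE hν)
      ((geomRenyi_le_chDiv α E F hd hν).trans hx)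
  refine ⟨fun h => ?_, fun x hx => ?_⟩
  · have h1 := geomRenyi_le_chDiv α E F hd hst
    rw [h, le_bot_iff] at h1
    exact geomRenyi_ne_bot (hE.2 d hd _ hst.1) (hF.2 d hd _ hst.1) (blockApply_ne_zero hE hst) h1
  · have hs : SuppLE (choi E) (choi F) := by
      have h1 := (hb _ hst x hx).1
      have hd' : (d : ℂ)⁻¹ ≠ 0 := inv_ne_zero (by exact_mod_cast (by omega : d ≠ 0))
      have h2 : ∀ G : Matrix (Fin d) (Fin d) ℂ →ₗ[ℂ] Matrix (Fin d') (Fin d') ℂ,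
          blockApply G (((d : ℂ)⁻¹) • pureIn (1 : Matrix (Fin d) (Fin d) ℂ)) =
            ((d : ℂ)⁻¹) • choi G := by
        intro G
        have : blockApply G (((d : ℂ)⁻¹) • pureIn (1 : Matrix (Fin d) (Fin d) ℂ)) =
          ((d : ℂ)⁻¹) • blockApply G (pureIn (1 : Matrix (Fin d) (Fin d) ℂ)) :=
            (blockApplyL (Fin d) G).map_smul _ _
        rw [this, blockApply_eq_act, act_pureIn]
        simp
      rw [h2, h2] at h1
      intro v hv
      have h3 := h1 v (by rw [smul_mulVec, hv, smul_zero])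
      rw [smul_mulVec] at h3
      exact (smul_eq_zero.1 h3).resolve_left hd'
    exact ⟨hs, claimA hα hα2 (choi_psd hd hE) (choi_psd hd hF) hs _
      fun ν hν => (hb ν hν x hx).2⟩

theorem superadd {d₁ d₁' d₂ d₂' : ℕ} (α : ℝ)
    {E₁ F₁ : Matrix (Fin d₁) (Fin d₁) ℂ →ₗ[ℂ] Matrix (Fin d₁') (Fin d₁') ℂ}
    {E₂ F₂ : Matrix (Fin d₂) (Fin d₂) ℂ →ₗ[ℂ] Matrix (Fin d₂') (Fin d₂') ℂ}
    (hE₁ : IsQChannel E₁) (hF₁ : IsQChannel F₁)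
    (hE₂ : IsQChannel E₂) (hF₂ : IsQChannel F₂) :
    chDiv (geomD α) E₁ F₁ + chDiv (geomD α) E₂ F₂ ≤
      chDiv (geomD α) (tensorChannel E₁ E₂) (tensorChannel F₁ F₂) := by
  refine EReal.add_le_of_forall_lt fun a ha b hb => ?_
  unfold chDiv at ha hb
  simp only [lt_iSup_iff] at ha hb
  obtain ⟨k₁, hk₁, ν₁, hν₁, ha⟩ := ha
  obtain ⟨k₂, hk₂, ν₂, hν₂, hb⟩ := hb
  have pE₁ := hE₁.2 k₁ hk₁ ν₁ hν₁.1
  have pF₁ := hF₁.2 k₁ hk₁ ν₁ hν₁.1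
  have pE₂ := hE₂.2 k₂ hk₂ ν₂ hν₂.1
  have pF₂ := hF₂.2 k₂ hk₂ ν₂ hν₂.1
  have hst : IsState ((ν₁ ⊗ₖ ν₂).submatrix (pe k₁ k₂ (Fin d₁) (Fin d₂))
      (pe k₁ k₂ (Fin d₁) (Fin d₂))) := by
    refine ⟨(hν₁.1.kronecker hν₂.1).submatrix _, ?_⟩
    have : ((ν₁ ⊗ₖ ν₂).submatrix (pe k₁ k₂ (Fin d₁) (Fin d₂))
      (pe k₁ k₂ (Fin d₁) (Fin d₂))).trace = (ν₁ ⊗ₖ ν₂).trace :=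
      Equiv.sum_comp (pe k₁ k₂ (Fin d₁) (Fin d₂)) fun i => (ν₁ ⊗ₖ ν₂) i i
    rw [this, trace_kronecker, hν₁.2, hν₂.2, one_mul]
  have h1 := geomRenyi_le_chDiv α (tensorChannel E₁ E₂) (tensorChannel F₁ F₂)
    (Nat.mul_pos hk₁ hk₂) hst
  rw [blockApply_tensor, blockApply_tensor,
    geomRenyi_submatrix α (pE₁.kronecker pE₂) (pF₁.kronecker pF₂)] at h1
  exact ((add_le_add ha.le hb.le).trans (geomRenyi_kron_ge α pE₁ pE₂ pF₁ pF₂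
    (blockApply_ne_zero hE₁ hν₁) (blockApply_ne_zero hE₂ hν₂))).trans h1

theorem subadd_real {d₁ d₁' d₂ d₂' : ℕ} (hd₁ : 1 ≤ d₁) (hd₂ : 1 ≤ d₂)
    {α : ℝ} (hα : 1 < α) (hα2 : α ≤ 2)
    {E₁ F₁ : Matrix (Fin d₁) (Fin d₁) ℂ →ₗ[ℂ] Matrix (Fin d₁') (Fin d₁') ℂ}
    {E₂ F₂ : Matrix (Fin d₂) (Fin d₂) ℂ →ₗ[ℂ] Matrix (Fin d₂') (Fin d₂') ℂ}
    (hE₁ : IsQChannel E₁) (hF₁ : IsQChannel F₁)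
    (hE₂ : IsQChannel E₂) (hF₂ : IsQChannel F₂) {x₁ x₂ : ℝ}
    (h₁ : chDiv (geomD α) E₁ F₁ ≤ (x₁ : EReal)) (h₂ : chDiv (geomD α) E₂ F₂ ≤ (x₂ : EReal)) :
    chDiv (geomD α) (tensorChannel E₁ E₂) (tensorChannel F₁ F₂) ≤ ((x₁ + x₂ : ℝ) : EReal) := by
  obtain ⟨s₁, L₁⟩ := (single_channel hd₁ hα hα2 hE₁ hF₁).2 x₁ h₁
  obtain ⟨s₂, L₂⟩ := (single_channel hd₂ hα hα2 hE₂ hF₂).2 x₂ h₂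
  have pE₁ := choi_psd hd₁ hE₁
  have pF₁ := choi_psd hd₁ hF₁
  have pE₂ := choi_psd hd₂ hE₂
  have pF₂ := choi_psd hd₂ hF₂
  have hL := kron_le (ptr_psd (gP_psd α pE₂)) (Real.rpow_pos_of_pos two_pos _).le L₁ L₂
  rw [← ptr_kron, ← gP_kron α pE₁ pE₂ pF₁ pF₂,
    ← gP_submatrix α (pE₁.kronecker pE₂) (pF₁.kronecker pF₂), ← choi_tensor, ← choi_tensor,
    ← Real.rpow_add two_pos, ← mul_add] at hL
  have pE : (choi (tensorChannel E₁ E₂)).PosSemidef := by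
    rw [choi_tensor]; exact (pE₁.kronecker pE₂).submatrix _
  have pF : (choi (tensorChannel F₁ F₂)).PosSemidef := by
    rw [choi_tensor]; exact (pF₁.kronecker pF₂).submatrix _
  have s : SuppLE (choi (tensorChannel E₁ E₂)) (choi (tensorChannel F₁ F₂)) := by
    rw [choi_tensor, choi_tensor, suppLE_submatrix]
    exact suppLE_kron pF₁ pF₂ s₁ s₂
  unfold chDiv
  refine iSup₂_le fun k hk => iSup₂_le fun ν hν => ?_
  obtain ⟨-, q2, q3, q4⟩ := claimB hα hα2 pE pF s _ hL hν
  exact geomRenyi_le hα q2 q3 q4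

theorem chDiv_empty {n m : Type} [Fintype n] [DecidableEq n] [Fintype m] [DecidableEq m]
    [IsEmpty n] (α : ℝ) (E F : Matrix n n ℂ →ₗ[ℂ] Matrix m m ℂ) : chDiv (geomD α) E F = ⊥ := by
  unfold chDiv
  rw [← le_bot_iff]
  refine iSup₂_le fun k hk => iSup₂_le fun ν hν => ?_
  exfalso
  have := hν.2
  rw [Matrix.trace_eq_zero_of_isEmpty] at this
  exact zero_ne_one this

end Part4
end QCD

namespace QCD

/-- Additivity of the geometric Rényi channel divergence. -/
theorem geomRenyi_channel_additive {d₁ d₁' d₂ d₂' : ℕ} (α : ℝ) (hα : 1 < α ∧ α ≤ 2)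
    (E₁ F₁ : Matrix (Fin d₁) (Fin d₁) ℂ →ₗ[ℂ] Matrix (Fin d₁') (Fin d₁') ℂ)
    (E₂ F₂ : Matrix (Fin d₂) (Fin d₂) ℂ →ₗ[ℂ] Matrix (Fin d₂') (Fin d₂') ℂ)
    (hE₁ : IsQChannel E₁) (hF₁ : IsQChannel F₁)
    (hE₂ : IsQChannel E₂) (hF₂ : IsQChannel F₂) :
    chDiv (geomD α) (tensorChannel E₁ E₂) (tensorChannel F₁ F₂) =
      chDiv (geomD α) E₁ F₁ + chDiv (geomD α) E₂ F₂ := by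
  refine le_antisymm ?_ (superadd α hE₁ hF₁ hE₂ hF₂)
  rcases Nat.eq_zero_or_pos d₁ with h | hd₁
  · subst h
    rw [chDiv_empty]; exact bot_le
  rcases Nat.eq_zero_or_pos d₂ with h | hd₂
  · subst h
    rw [chDiv_empty]; exact bot_le
  have b₁ := (single_channel hd₁ hα.1 hα.2 hE₁ hF₁).1
  have b₂ := (single_channel hd₂ hα.1 hα.2 hE₂ hF₂).1
  by_cases t₁ : chDiv (geomD α) E₁ F₁ = ⊤
  · rw [t₁, EReal.top_add_of_ne_bot b₂]; exact le_top
  by_cases t₂ : chDiv (geomD α) E₂ F₂ = ⊤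
  · rw [t₂, EReal.add_top_of_ne_bot b₁]; exact le_top
  have e₁ := EReal.coe_toReal t₁ b₁
  have e₂ := EReal.coe_toReal t₂ b₂
  have := subadd_real hd₁ hd₂ hα.1 hα.2 hE₁ hF₁ hE₂ hF₂ e₁.ge e₂.ge
  rwa [EReal.coe_add, e₁, e₂] at this

end QCD
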